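/- Let θ₁, θ₂ ∈ (−π, π) with θ₁ ≠ θ₂, and set θ := (θ₂ − θ₁)/2. Then the integral −(1/(4π)) ∫_{−∞}^{0} ( (t + e^{iθ₁})(t + e^{iθ₂}) / ((t − e^{iθ₁})(t − e^{iθ₂})) − 1 ) · dt/t converges absolutely and equals −θ·cot(θ)/π (where θ·cot θ is interpreted as 0 when θ = ±π/2, consistently with cot(±π/2) = 0). -/

import Mathlib

/-!
Write `a = e^{iθ₁}` and `b = e^{iθ₂}`. Since `(t + a)(t + b) - (t - a)(t - b) = 2(a + b)t`, the
integrand equals `2(a + b) / ((t - a)(t - b))` for `t ≠ 0`, which decays like `1 / (1 + t²)` on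
the negative half-line because `‖t - e^{iφ}‖ ≥ cos (φ/2) √(1 + t²)` for `t ≤ 0`
(`norm_sub_exp_ge`). By partial fractions, `log (a - t) - log (b - t)` is, up to the factor
`2(a + b)/(a - b)`, an antiderivative: for `t ≤ 0` and `|φ| < π` the point `e^{iφ} - t` stays in
the slit plane. It tends to `0` at `-∞` and equals `i(θ₁ - θ₂)` at `0`, and
`(a + b)/(a - b) = i cot θ`.
-/

open Complex Real MeasureTheory

lemma exp_sub_mem_slitPlane {φ : ℝ} (h : φ ∈ Set.Ioo (-Real.pi) Real.pi) {t : ℝ} (ht : t ≤ 0) :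
    Complex.exp (Complex.I * φ) - t ∈ slitPlane := by
  rw [mul_comm, Complex.mem_slitPlane_iff]
  by_cases hs : Real.sin φ = 0
  · left
    have h0 : φ = 0 := (Real.sin_eq_zero_iff_of_lt_of_lt h.1 h.2).1 hs
    subst h0
    simp
    linarith
  · right
    simpa [Complex.exp_ofReal_mul_I_im] using hs

lemma log_exp_I_mul {φ : ℝ} (h : φ ∈ Set.Ioo (-Real.pi) Real.pi) :
    Complex.log (Complex.exp (Complex.I * φ)) = Complex.I * φ := by
  apply Complex.log_exp <;> simp
  · exact h.1
  · exact h.2.le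

/-- The squares of the two sides differ by `sin² (φ/2) (1 + t)² - 2 t cos² (φ/2)`. -/
lemma norm_sub_exp_ge (φ : ℝ) {t : ℝ} (ht : t ≤ 0) :
    Real.cos (φ / 2) * √(1 + t ^ 2) ≤ ‖(t : ℂ) - Complex.exp (Complex.I * φ)‖ := by
  refine le_of_abs_le (abs_le_of_sq_le_sq ?_ (norm_nonneg _))
  rw [mul_pow, Real.sq_sqrt (by positivity), ← Complex.normSq_eq_norm_sq, Complex.normSq_apply,
    mul_comm Complex.I]
  simp only [Complex.sub_re, Complex.sub_im, Complex.ofReal_re, Complex.ofReal_im,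
    Complex.exp_ofReal_mul_I_re, Complex.exp_ofReal_mul_I_im]
  have h1 := Real.sin_sq_add_cos_sq φ
  have h2 : Real.cos φ = 2 * Real.cos (φ / 2) ^ 2 - 1 := by
    rw [← Real.cos_two_mul]; ring_nf
  have h3 := Real.sin_sq_add_cos_sq (φ / 2)
  have h4 : 0 ≤ Real.sin (φ / 2) ^ 2 * (1 + t) ^ 2 := by positivity
  have h5 : 0 ≤ -t * Real.cos (φ / 2) ^ 2 := mul_nonneg (by linarith) (sq_nonneg _)
  have h6 : Real.sin (φ / 2) ^ 2 = 1 - Real.cos (φ / 2) ^ 2 := by linarith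
  rw [h6] at h4
  have h7 : Real.sin φ ^ 2 = 1 - Real.cos φ ^ 2 := by linarith
  rw [h2] at h7 ⊢
  nlinarith

lemma integrableOn_inv_mul {θ₁ θ₂ : ℝ} (h₁ : θ₁ ∈ Set.Ioo (-Real.pi) Real.pi)
    (h₂ : θ₂ ∈ Set.Ioo (-Real.pi) Real.pi) :
    IntegrableOn (fun t : ℝ => (((t : ℂ) - Complex.exp (Complex.I * θ₁)) *
      ((t : ℂ) - Complex.exp (Complex.I * θ₂)))⁻¹) (Set.Iic 0) := by
  have c1 : 0 < Real.cos (θ₁ / 2) :=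
    Real.cos_pos_of_mem_Ioo ⟨by linarith [h₁.1], by linarith [h₁.2]⟩
  have c2 : 0 < Real.cos (θ₂ / 2) :=
    Real.cos_pos_of_mem_Ioo ⟨by linarith [h₂.1], by linarith [h₂.2]⟩
  refine Integrable.mono'
    ((integrable_inv_one_add_sq.const_mul (Real.cos (θ₁ / 2) * Real.cos (θ₂ / 2))⁻¹).integrableOn)
    (Measurable.aestronglyMeasurable (by fun_prop)) ?_
  refine (ae_restrict_iff' measurableSet_Iic).2 (Filter.Eventually.of_forall fun t ht => ?_)
  rw [norm_inv, norm_mul, ← mul_inv]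
  have hp : 0 < 1 + t ^ 2 := by positivity
  apply inv_anti₀ (by positivity)
  calc Real.cos (θ₁ / 2) * Real.cos (θ₂ / 2) * (1 + t ^ 2)
      = (Real.cos (θ₁ / 2) * √(1 + t ^ 2)) * (Real.cos (θ₂ / 2) * √(1 + t ^ 2)) := by
        rw [mul_mul_mul_comm, Real.mul_self_sqrt hp.le]
    _ ≤ _ := mul_le_mul (norm_sub_exp_ge θ₁ ht) (norm_sub_exp_ge θ₂ ht) (by positivity)
        (norm_nonneg _)

/-- For `t < 0` both logarithms contain the same term `log |t|`, which cancels. -/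
lemma tendsto_log_sub_log (a b : ℂ) (ha : ∀ t : ℝ, t ≤ 0 → a - t ∈ slitPlane)
    (hb : ∀ t : ℝ, t ≤ 0 → b - t ∈ slitPlane) :
    Filter.Tendsto (fun t : ℝ => Complex.log (a - t) - Complex.log (b - t)) Filter.atBot
      (nhds 0) := by
  have key : ∀ c : ℂ, Filter.Tendsto (fun t : ℝ => Complex.log (1 - c / t)) Filter.atBot
      (nhds 0) := by
    intro c
    have h0 : Filter.Tendsto (fun t : ℝ => ((t⁻¹ : ℝ) : ℂ)) Filter.atBot (nhds 0) := by
      exact (Complex.continuous_ofReal.tendsto' 0 0 Complex.ofReal_zero).comp tendsto_inv_atBot_zero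
    have h1 : Filter.Tendsto (fun t : ℝ => 1 - c / t) Filter.atBot (nhds 1) := by
      simpa [div_eq_mul_inv] using (h0.const_mul c).const_sub 1
    simpa using h1.clog (by simp)
  have split : ∀ c : ℂ, (∀ t : ℝ, t ≤ 0 → c - t ∈ slitPlane) → ∀ t : ℝ, t < 0 →
      Complex.log (c - t) = Real.log (-t) + Complex.log (1 - c / t) := by
    intro c hc t ht
    have ht' : (t : ℂ) ≠ 0 := by exact_mod_cast ht.ne
    have e : c - t = ((-t : ℝ) : ℂ) * (1 - c / t) := by
      push_cast; field_simp; ring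
    have hne : 1 - c / (t : ℂ) ≠ 0 := by
      intro h
      exact Complex.slitPlane_ne_zero (hc t ht.le) (by rw [e, h, mul_zero])
    rw [e, Complex.log_ofReal_mul (by linarith) hne]
  have := (key a).sub (key b)
  rw [sub_zero] at this
  refine this.congr' ?_
  filter_upwards [Filter.eventually_lt_atBot 0] with t ht
  rw [split a ha t ht, split b hb t ht]
  ring

lemma integral_partial_fractions {θ₁ θ₂ : ℝ} (h₁ : θ₁ ∈ Set.Ioo (-Real.pi) Real.pi)
    (h₂ : θ₂ ∈ Set.Ioo (-Real.pi) Real.pi) :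
    ∫ t in Set.Iic (0 : ℝ), (Complex.exp (Complex.I * θ₁) - Complex.exp (Complex.I * θ₂)) *
      (((t : ℂ) - Complex.exp (Complex.I * θ₁)) * ((t : ℂ) - Complex.exp (Complex.I * θ₂)))⁻¹
      = Complex.I * (θ₁ - θ₂) := by
  have hd : ∀ t ∈ Set.Iic (0 : ℝ), HasDerivAt
      (fun t : ℝ => Complex.log (Complex.exp (Complex.I * θ₁) - t) -
        Complex.log (Complex.exp (Complex.I * θ₂) - t))
      ((Complex.exp (Complex.I * θ₁) - Complex.exp (Complex.I * θ₂)) *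
      (((t : ℂ) - Complex.exp (Complex.I * θ₁)) * ((t : ℂ) - Complex.exp (Complex.I * θ₂)))⁻¹)
      t := by
    intro t ht
    have m1 := exp_sub_mem_slitPlane h₁ ht
    have m2 := exp_sub_mem_slitPlane h₂ ht
    have d := (((Complex.ofRealCLM.hasDerivAt (x := t)).const_sub _).clog_real m1).sub
      (((Complex.ofRealCLM.hasDerivAt (x := t)).const_sub _).clog_real m2)
    refine d.congr_deriv ?_
    have n1 := Complex.slitPlane_ne_zero m1
    have n2 := Complex.slitPlane_ne_zero m2
    have n1' : (t : ℂ) - Complex.exp (Complex.I * θ₁) ≠ 0 := by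
      rw [← neg_sub]; exact neg_ne_zero.2 n1
    have n2' : (t : ℂ) - Complex.exp (Complex.I * θ₂) ≠ 0 := by
      rw [← neg_sub]; exact neg_ne_zero.2 n2
    simp only [Complex.ofRealCLM_apply, Complex.ofReal_one]
    rw [← neg_sub (t : ℂ), ← neg_sub (t : ℂ) (Complex.exp (Complex.I * θ₂))]
    field_simp
    ring
  rw [integral_Iic_of_hasDerivAt_of_tendsto' hd ((integrableOn_inv_mul h₁ h₂).const_mul _)
    (tendsto_log_sub_log _ _ (fun t ht => exp_sub_mem_slitPlane h₁ ht)
      (fun t ht => exp_sub_mem_slitPlane h₂ ht))]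
  simp only [Complex.ofReal_zero, sub_zero]
  rw [log_exp_I_mul h₁, log_exp_I_mul h₂]
  ring

/-- Green's function between adjacent vertices: for `θ₁ ≠ θ₂` in `(-π, π)` and
`θ = (θ₂ - θ₁)/2`, the integral
`-(1/(4π)) ∫_{-∞}^0 ((t+e^{iθ₁})(t+e^{iθ₂})/((t-e^{iθ₁})(t-e^{iθ₂})) - 1) dt/t`
converges absolutely and equals `-θ cot θ/π` (with `cot(±π/2) = 0`). -/
theorem green_adjacent_vertices (θ₁ θ₂ : ℝ) (h₁ : θ₁ ∈ Set.Ioo (-Real.pi) Real.pi)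
    (h₂ : θ₂ ∈ Set.Ioo (-Real.pi) Real.pi) (hne : θ₁ ≠ θ₂) (θ : ℝ) (hθ : θ = (θ₂ - θ₁) / 2) :
    IntegrableOn
      (fun t : ℝ =>
        (((t : ℂ) + Complex.exp (Complex.I * θ₁)) * ((t : ℂ) + Complex.exp (Complex.I * θ₂)) /
            (((t : ℂ) - Complex.exp (Complex.I * θ₁)) * ((t : ℂ) - Complex.exp (Complex.I * θ₂)))
          - 1) / t)
      (Set.Iio 0) volume ∧
    -(1 / (4 * (Real.pi : ℂ))) *
        (∫ t in Set.Iio (0 : ℝ),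
          (((t : ℂ) + Complex.exp (Complex.I * θ₁)) * ((t : ℂ) + Complex.exp (Complex.I * θ₂)) /
              (((t : ℂ) - Complex.exp (Complex.I * θ₁)) * ((t : ℂ) - Complex.exp (Complex.I * θ₂)))
            - 1) / t)
      = ((-(θ * Real.cot θ) / Real.pi : ℝ) : ℂ) := by
  set a := Complex.exp (Complex.I * θ₁) with ha
  set b := Complex.exp (Complex.I * θ₂) with hb
  have hs : Real.sin θ ≠ 0 := by
    intro h
    have := (Real.sin_eq_zero_iff_of_lt_of_lt (by linarith [h₁.2, h₂.1])
      (by linarith [h₁.1, h₂.2])).1 h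
    apply hne
    linarith
  -- Both `a` and `b` are rotations of `e^{∓iθ}` by the half-sum of the angles.
  set u := Complex.exp (Complex.I * ((θ₁ + θ₂) / 2)) with hu
  have hu0 : u ≠ 0 := Complex.exp_ne_zero _
  have ea : a = u * (Complex.cos θ - Complex.sin θ * Complex.I) := by
    rw [← Complex.cos_neg, sub_eq_add_neg, ← neg_mul, ← Complex.sin_neg, ← Complex.exp_mul_I, hu,
      ← Complex.exp_add, ha, hθ]
    push_cast; ring_nf
  have eb : b = u * (Complex.cos θ + Complex.sin θ * Complex.I) := by
    rw [← Complex.exp_mul_I, hu, ← Complex.exp_add, hb, hθ]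
    push_cast; ring_nf
  have hsC : Complex.sin θ ≠ 0 := by exact_mod_cast hs
  have hab : a - b ≠ 0 := by
    have : a - b = -(2 * u * Complex.sin θ * Complex.I) := by rw [ea, eb]; ring
    rw [this]
    exact neg_ne_zero.2 (by simp [hu0, hsC])
  have hq : 2 * (a + b) / (a - b) = 2 * Complex.I * (Complex.cos θ / Complex.sin θ) := by
    rw [div_eq_iff hab, ea, eb]
    field_simp
    ring_nf
    simp only [Complex.I_sq]
    ring
  have hcong : ∀ t ∈ Set.Iio (0 : ℝ), 2 * (a + b) * (((t : ℂ) - a) * ((t : ℂ) - b))⁻¹ =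
      (((t : ℂ) + a) * ((t : ℂ) + b) / (((t : ℂ) - a) * ((t : ℂ) - b)) - 1) / t := by
    intro t ht
    have n1 : (t : ℂ) - a ≠ 0 := by
      rw [← neg_sub]
      exact neg_ne_zero.2 (Complex.slitPlane_ne_zero (exp_sub_mem_slitPlane h₁ (le_of_lt ht)))
    have n2 : (t : ℂ) - b ≠ 0 := by
      rw [← neg_sub]
      exact neg_ne_zero.2 (Complex.slitPlane_ne_zero (exp_sub_mem_slitPlane h₂ (le_of_lt ht)))
    have ht' : (t : ℂ) ≠ 0 := by exact_mod_cast (ne_of_lt ht)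
    field_simp
    ring
  refine ⟨IntegrableOn.congr_fun (((integrableOn_inv_mul h₁ h₂).mono_set
    Set.Iio_subset_Iic_self).const_mul (2 * (a + b))) hcong measurableSet_Iio, ?_⟩
  have hI := integral_partial_fractions h₁ h₂
  rw [← ha, ← hb, integral_const_mul] at hI
  rw [← setIntegral_congr_fun measurableSet_Iio hcong, ← integral_Iic_eq_integral_Iio,
    integral_const_mul]
  have hJ : 2 * (a + b) * ∫ t in Set.Iic (0 : ℝ), (((t : ℂ) - a) * ((t : ℂ) - b))⁻¹ =
      2 * (a + b) / (a - b) * (Complex.I * (θ₁ - θ₂)) := by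
    rw [← hI]; field_simp
  have hd : (θ₁ : ℂ) - θ₂ = -2 * θ := by rw [hθ]; push_cast; ring
  have hpi : (Real.pi : ℂ) ≠ 0 := by exact_mod_cast Real.pi_ne_zero
  rw [hJ, hq, hd, Real.cot_eq_cos_div_sin]
  push_cast
  field_simp
  ring_nf
  simp only [Complex.I_sq]
  ring
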